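/- (Owen's Rellich inequality for convex domains) Let Ω ⊂ ℝ^N be a bounded convex open set and d(x) = dist(x, ∂Ω). Then for every u ∈ C_c^∞(Ω), ∫_Ω (Δu)² dx ≥ (9/16) ∫_Ω u²/d(x)⁴ dx. -/

import Mathlib

open Real MeasureTheory

/-- The Laplacian of `f : ℝ^N → ℝ`. -/
noncomputable def lap {N : ℕ} (f : EuclideanSpace ℝ (Fin N) → ℝ)
    (x : EuclideanSpace ℝ (Fin N)) : ℝ :=
  ∑ i, iteratedFDeriv ℝ 2 f x ![EuclideanSpace.single i 1, EuclideanSpace.single i 1]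

/-!
On a convex set the distance `d` to the boundary is concave, so `-∂ₑ∂ₑ d` is a positive measure for
every direction `e`; equivalently `∫ ∂ₑφ ∂ₑd ≥ 0` for Lipschitz `φ ≥ 0` supported in the set. Taking
`φ = v² / d ^ (α + 1)` and completing a square in each direction of an orthonormal basis, the
eikonal equation `‖∇d‖ = 1` gives Hardy's inequality
`((α + 1) / 2)² ∫ v² / d ^ (α + 2) ≤ ∫ ‖∇v‖² / d ^ α`.
The case `α = 2` for `u` yields the factor `9 / 4`, and the case `α = 0` for the partial derivatives
of `u` the factor `1 / 4`; their product is `9 / 16`, because `∫ (Δu)² = ∑ᵢ ∫ ‖∇∂ᵢu‖²` after two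
integrations by parts.
-/

open Set Filter Topology Metric Laplacian
open scoped NNReal

section Distance

theorem infDist_frontier_pos {X : Type*} [PseudoMetricSpace X] {s : Set X} {x : X}
    (hs : IsOpen s) (hne : (frontier s).Nonempty) (hx : x ∈ s) : 0 < infDist x (frontier s) :=
  (isClosed_frontier.notMem_iff_infDist_pos hne).1 fun h => (hs.frontier_eq ▸ h).2 hx

variable {E : Type*} [NormedAddCommGroup E] [NormedSpace ℝ E] {s : Set E} {x : E}

theorem concaveOn_infDist_compl (hs : Convex ℝ s) : ConcaveOn ℝ s fun x => infDist x sᶜ := by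
  refine ⟨hs, fun x hx y hy a b ha hb hab => ?_⟩
  rcases sᶜ.eq_empty_or_nonempty with hne | hne
  · simp [hne]
  set r : ℝ := a • infDist x sᶜ + b • infDist y sᶜ with hr
  refine (le_infDist hne).2 fun z hz => le_of_not_gt fun hzr => hz ?_
  set w : E := z - (a • x + b • y) with hw
  have hwr : ‖w‖ < r := by rwa [hw, ← dist_eq_norm, dist_comm]
  have hr0 : 0 < r := (norm_nonneg w).trans_lt hwr
  have shifted_mem : ∀ p ∈ s, p + (infDist p sᶜ / r) • w ∈ s := by
    intro p hp
    rcases (infDist_nonneg (x := p) (s := sᶜ)).eq_or_lt with h0 | hpos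
    · simpa [← h0] using hp
    · refine ball_infDist_compl_subset (x := p) ?_
      rw [mem_ball, dist_self_add_left, norm_smul, norm_of_nonneg (by positivity),
        div_mul_eq_mul_div, div_lt_iff₀ hr0]
      gcongr
  have hweights : a * (infDist x sᶜ / r) + b * (infDist y sᶜ / r) = 1 := by
    rw [← mul_div_assoc, ← mul_div_assoc, ← add_div, ← smul_eq_mul, ← smul_eq_mul, ← hr,
      div_self hr0.ne']
  have hz_eq : a • (x + (infDist x sᶜ / r) • w) + b • (y + (infDist y sᶜ / r) • w) = z :=
    calc
      _ = (a • x + b • y) + (a * (infDist x sᶜ / r) + b * (infDist y sᶜ / r)) • w := by module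
      _ = z := by rw [hweights, hw]; module
  exact hz_eq ▸ hs (shifted_mem x hx) (shifted_mem y hy) ha hb hab

theorem infDist_frontier_eq_infDist_compl [FiniteDimensional ℝ E] (hs : IsOpen s)
    (hne : (frontier s).Nonempty) (hx : x ∈ s) : infDist x (frontier s) = infDist x sᶜ := by
  have hsub : frontier s ⊆ sᶜ := hs.frontier_eq ▸ fun _ hy => hy.2
  obtain ⟨y, hy, hxy⟩ :=
    exists_mem_frontier_infDist_compl_eq_dist hx (nonempty_compl.1 (hne.mono hsub))
  exact le_antisymm (hxy ▸ infDist_le_dist_of_mem hy) (infDist_le_infDist_of_subset hsub hne)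

theorem concaveOn_infDist_frontier [FiniteDimensional ℝ E] (hs : IsOpen s) (hconv : Convex ℝ s)
    (hne : (frontier s).Nonempty) : ConcaveOn ℝ s fun x => infDist x (frontier s) :=
  (concaveOn_infDist_compl hconv).congr fun _ hx =>
    (infDist_frontier_eq_infDist_compl hs hne hx).symm

theorem one_le_norm_fderiv_infDist [ProperSpace E] (hs : IsClosed s) (hne : s.Nonempty)
    (hx : x ∉ s) (hdiff : DifferentiableAt ℝ (fun y => infDist y s) x) :
    1 ≤ ‖fderiv ℝ (fun y => infDist y s) x‖ := by
  set d : E → ℝ := fun y => infDist y s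
  have hpos : 0 < d x := (hs.notMem_iff_infDist_pos hne).1 hx
  obtain ⟨y, hy, hxy⟩ := hs.exists_infDist_eq_dist hne x
  have hnorm : ‖y - x‖ = d x := by rw [← dist_eq_norm, dist_comm]; exact hxy.symm
  have hdecay : ∀ t ∈ Ioc (0 : ℝ) 1, d (x + t • (y - x)) ≤ (1 - t) * d x := by
    intro t ht
    calc d (x + t • (y - x)) ≤ dist (x + t • (y - x)) y := infDist_le_dist_of_mem hy
      _ = ‖(1 - t) • (y - x)‖ := by rw [dist_comm, dist_eq_norm]; congr 1; module
      _ = (1 - t) * d x := by rw [norm_smul, norm_of_nonneg (sub_nonneg.2 ht.2), hnorm]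
  have hslope : fderiv ℝ d x (y - x) ≤ -d x := by
    refine le_of_tendsto
      (hdiff.hasFDerivAt.hasLineDerivAt (y - x)).tendsto_slope_zero_right ?_
    filter_upwards [Ioc_mem_nhdsGT one_pos] with t ht
    rw [smul_eq_mul, inv_mul_eq_div, div_le_iff₀ ht.1]
    linarith [hdecay t ht]
  have hbound : d x ≤ ‖fderiv ℝ d x‖ * d x :=
    calc d x ≤ |fderiv ℝ d x (y - x)| := le_abs.2 (Or.inr (by linarith))
      _ ≤ ‖fderiv ℝ d x‖ * d x := hnorm ▸ (fderiv ℝ d x).le_opNorm (y - x)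
  exact (le_mul_iff_one_le_left hpos).1 hbound

end Distance

section ConcaveWeakly

theorem lineDeriv_le_lineDeriv_sub_smul_of_concaveOn {E : Type*} [AddCommGroup E] [Module ℝ E]
    {Ω : Set E} {d : E → ℝ} (hd : ConcaveOn ℝ Ω d) {x e : E} {t : ℝ} (ht : 0 < t)
    (hx : x ∈ Ω) (hxt : x - t • e ∈ Ω) (hdx : LineDifferentiableAt ℝ d x e)
    (hdxt : LineDifferentiableAt ℝ d (x - t • e) e) :
    lineDeriv ℝ d x e ≤ lineDeriv ℝ d (x - t • e) e := by
  set L : ℝ →ᵃ[ℝ] E := AffineMap.lineMap (x - t • e) (x - t • e + e)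
  have hL : ∀ r, L r = x - t • e + r • e := fun r => by
    simp [L, AffineMap.lineMap_apply, add_comm]
  have hL0 : L 0 = x - t • e := by simp [hL]
  have hLt : L t = x := by simp [hL]
  have hconc : ConcaveOn ℝ (L ⁻¹' Ω) (d ∘ L) := hd.comp_affineMap L
  have h0 : HasDerivAt (d ∘ L) (lineDeriv ℝ d (x - t • e) e) 0 := by
    simpa [HasLineDerivAt, Function.comp_def, hL] using hdxt.hasLineDerivAt
  have h1 : HasDerivAt (d ∘ L) (lineDeriv ℝ d x e) t := by
    have h := hdx.hasLineDerivAt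
    rw [HasLineDerivAt, ← sub_self t] at h
    refine (h.comp_sub_const t t).congr_deriv rfl |>.congr_of_eventuallyEq (.of_forall fun r => ?_)
    simp only [Function.comp_apply, hL]
    congr 1
    module
  have hmem0 : (0 : ℝ) ∈ L ⁻¹' Ω := by rwa [mem_preimage, hL0]
  have hmemt : t ∈ L ⁻¹' Ω := by rwa [mem_preimage, hLt]
  exact (hconc.le_slope_of_hasDerivAt hmem0 hmemt ht h1).trans
    (hconc.slope_le_of_hasDerivAt hmem0 hmemt ht h0)

theorem integral_sub_translate_mul {G : Type*} [AddGroup G] [MeasurableSpace G] [MeasurableAdd G]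
    {μ : Measure G} [μ.IsAddRightInvariant] {f g : G → ℝ} {v : G}
    (hfg : Integrable (fun x => f x * g x) μ) (hfgv : Integrable (fun x => f x * g (x - v)) μ) :
    ∫ x, (f (x + v) - f x) * g x ∂μ = ∫ x, f x * (g (x - v) - g x) ∂μ := by
  have hfvg : Integrable (fun x => f (x + v) * g x) μ := by
    simpa only [add_sub_cancel_right] using hfgv.comp_add_right v
  have heq : ∫ x, f (x + v) * g x ∂μ = ∫ x, f x * g (x - v) ∂μ := by
    rw [← integral_add_right_eq_self (fun x => f x * g (x - v)) v]
    simp only [add_sub_cancel_right]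
  simp_rw [sub_mul, mul_sub]
  rw [integral_sub hfvg hfg, integral_sub hfgv hfg, heq]

theorem lineDeriv_eq_zero_of_notMem_tsupport {E : Type*} [AddCommGroup E] [Module ℝ E]
    [TopologicalSpace E] [ContinuousAdd E] [ContinuousSMul ℝ E] {f : E → ℝ} {x : E}
    (hx : x ∉ tsupport f) (e : E) : lineDeriv ℝ f x e = 0 := by
  have hline : Tendsto (fun t : ℝ => x + t • e) (𝓝 0) (𝓝 x) :=
    Continuous.tendsto' (by fun_prop) _ _ (by simp)
  have hzero : (fun t : ℝ => f (x + t • e)) =ᶠ[𝓝 0] fun _ => 0 :=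
    hline.eventually (notMem_tsupport_iff_eventuallyEq.1 hx)
  rw [lineDeriv, hzero.deriv_eq, deriv_const]

variable {E : Type*} [NormedAddCommGroup E] [NormedSpace ℝ E] [FiniteDimensional ℝ E]
  [MeasurableSpace E] [BorelSpace E] {μ : Measure E} [μ.IsAddHaarMeasure] {φ : E → ℝ} {C : ℝ≥0}

-- Discrete integration by parts moves the difference quotient from `φ` to `g`.
theorem integral_lineDeriv_mul_nonneg {g : E → ℝ} {e : E} (hφ : LipschitzWith C φ)
    (hφc : HasCompactSupport φ) (hφ0 : ∀ x, 0 ≤ φ x) (hg : Integrable g μ)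
    (hmono : ∀ᶠ t : ℝ in 𝓝[>] 0, ∀ᵐ x ∂μ, x ∈ tsupport φ → g x ≤ g (x - t • e)) :
    0 ≤ ∫ x, lineDeriv ℝ φ x e * g x ∂μ := by
  refine ge_of_tendsto (hφ.integral_inv_smul_sub_mul_tendsto_integral_lineDeriv_mul hg e) ?_
  filter_upwards [hmono, self_mem_nhdsWithin] with t hmono_t (ht : 0 < t)
  obtain ⟨M, hM⟩ := hφc.exists_bound_of_continuous hφ.continuous
  have integrable_mul {h : E → ℝ} (hh : Integrable h μ) : Integrable (fun x => φ x * h x) μ :=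
    hh.bdd_mul hφ.continuous.aestronglyMeasurable (.of_forall hM)
  simp_rw [smul_eq_mul, mul_assoc, integral_const_mul]
  rw [integral_sub_translate_mul (integrable_mul hg) (integrable_mul (hg.comp_sub_right (t • e)))]
  refine mul_nonneg (inv_nonneg.2 ht.le) (integral_nonneg_of_ae ?_)
  filter_upwards [hmono_t] with x hx
  by_cases hxφ : x ∈ tsupport φ
  · exact mul_nonneg (hφ0 x) (sub_nonneg.2 (hx hxφ))
  · simp [image_eq_zero_of_notMem_tsupport hxφ]

theorem integral_lineDeriv_mul_lineDeriv_nonneg {Ω : Set E} {d : E → ℝ} {K : ℝ≥0}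
    (hΩ : IsOpen Ω) (hd : ConcaveOn ℝ Ω d) (hdl : LipschitzWith K d) (hφ : LipschitzWith C φ)
    (hφc : HasCompactSupport φ) (hφs : tsupport φ ⊆ Ω) (hφ0 : ∀ x, 0 ≤ φ x) (e : E) :
    0 ≤ ∫ x, lineDeriv ℝ φ x e * lineDeriv ℝ d x e ∂μ := by
  obtain ⟨δ, hδ, hthick⟩ := hφc.isCompact.exists_cthickening_subset_open hΩ hφs
  set S : Set E := cthickening δ (tsupport φ)
  have hS : IsCompact S := hφc.isCompact.cthickening
  have hφS : tsupport φ ⊆ S := self_subset_cthickening _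
  have htruncate (x : E) : lineDeriv ℝ φ x e * lineDeriv ℝ d x e =
      lineDeriv ℝ φ x e * S.indicator (fun y => lineDeriv ℝ d y e) x := by
    by_cases hx : x ∈ tsupport φ
    · rw [indicator_of_mem (hφS hx)]
    · simp only [lineDeriv_eq_zero_of_notMem_tsupport hx e, zero_mul]
  simp_rw [htruncate]
  refine integral_lineDeriv_mul_nonneg hφ hφc hφ0 ?_ ?_
  · exact (integrable_indicator_iff hS.measurableSet).2 <|
      Measure.integrableOn_of_bounded hS.measure_lt_top.ne
        (measurable_lineDeriv hdl.continuous).aestronglyMeasurable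
        (.of_forall fun _ => norm_lineDeriv_le_of_lipschitz ℝ hdl)
  have hsmall : ∀ᶠ t : ℝ in 𝓝[>] 0, t * ‖e‖ < δ :=
    ((continuous_mul_const ‖e‖).tendsto' 0 0 (zero_mul _)).mono_left nhdsWithin_le_nhds
      |>.eventually (gt_mem_nhds hδ)
  have hdiff := hdl.ae_lineDifferentiableAt (μ := μ) e
  filter_upwards [hsmall, self_mem_nhdsWithin] with t htδ (ht : 0 < t)
  have hdiff_shift : ∀ᵐ x ∂μ, LineDifferentiableAt ℝ d (x - t • e) e :=
    (measurePreserving_sub_right μ (t • e)).quasiMeasurePreserving.ae hdiff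
  filter_upwards [hdiff, hdiff_shift] with x hdx hdxt hx
  have hxt : x - t • e ∈ S := mem_cthickening_of_dist_le _ x _ _ hx <| by
    simpa [dist_eq_norm, norm_smul, abs_of_pos ht] using htδ.le
  rw [indicator_of_mem (hφS hx), indicator_of_mem hxt]
  exact lineDeriv_le_lineDeriv_sub_smul_of_concaveOn hd ht (hφs hx) (hthick hxt) hdx hdxt

end ConcaveWeakly

section Division

theorem exists_lipschitzWith_of_hasCompactSupport {X F : Type*} [PseudoMetricSpace X]
    [ProperSpace X] [SeminormedAddCommGroup F] {f : X → F} (hf : LocallyLipschitz f)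
    (hfc : HasCompactSupport f) : ∃ C, LipschitzWith C f := by
  obtain ⟨C, hC⟩ := hf.locallyLipschitzOn.exists_lipschitzOnWith_of_compact
    (hfc.isCompact.cthickening (r := 1))
  obtain ⟨M, hM⟩ := hfc.exists_bound_of_continuous hf.continuous
  have hfrom_support : ∀ x ∈ tsupport f, ∀ y, dist (f x) (f y) ≤ (C + M.toNNReal) * dist x y := by
    intro x hx y
    have hxC : x ∈ cthickening 1 (tsupport f) := self_subset_cthickening _ hx
    by_cases hy : y ∈ cthickening 1 (tsupport f)
    · exact (hC.dist_le_mul x hxC y hy).trans (by gcongr; exact le_add_of_nonneg_right (by simp))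
    · have hdist : 1 ≤ dist x y := le_of_not_ge fun h =>
        hy (mem_cthickening_of_dist_le y x 1 _ hx (dist_comm x y ▸ h))
      have hfy : f y = 0 :=
        image_eq_zero_of_notMem_tsupport fun h => hy (self_subset_cthickening _ h)
      calc dist (f x) (f y) = ‖f x‖ := by rw [hfy, dist_zero_right]
        _ ≤ M.toNNReal * 1 := by rw [mul_one]; exact (hM x).trans (le_coe_toNNReal M)
        _ ≤ (C + M.toNNReal) * dist x y := by
          gcongr
          exact le_add_of_nonneg_left C.coe_nonneg
  refine ⟨C + M.toNNReal, .of_dist_le_mul fun x y => ?_⟩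
  rw [NNReal.coe_add]
  by_cases hx : x ∈ tsupport f
  · exact hfrom_support x hx y
  by_cases hy : y ∈ tsupport f
  · rw [dist_comm (f x), dist_comm x]
    exact hfrom_support y hy x
  · rw [image_eq_zero_of_notMem_tsupport hx, image_eq_zero_of_notMem_tsupport hy, dist_self]
    positivity

variable {X : Type*} {f d : X → ℝ}

theorem tsupport_div_rpow_subset [TopologicalSpace X] (f d : X → ℝ) (s : ℝ) :
    tsupport (fun x => f x / d x ^ s) ⊆ tsupport f := by
  simpa only [div_eq_mul_inv] using tsupport_mul_subset_left

theorem hasCompactSupport_div_rpow [TopologicalSpace X] (hfc : HasCompactSupport f) (d : X → ℝ)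
    (s : ℝ) : HasCompactSupport fun x => f x / d x ^ s :=
  hfc.of_isClosed_subset (isClosed_tsupport _) (tsupport_div_rpow_subset f d s)

theorem exists_lipschitzWith_div_rpow [PseudoMetricSpace X] [ProperSpace X]
    (hf : LocallyLipschitz f) (hfc : HasCompactSupport f) (hd : LocallyLipschitz d)
    (hd0 : ∀ x ∈ tsupport f, 0 < d x) (s : ℝ) :
    ∃ C, LipschitzWith C fun x => f x / d x ^ s := by
  refine exists_lipschitzWith_of_hasCompactSupport (fun x => ?_)
    (hasCompactSupport_div_rpow hfc d s)
  by_cases hx : x ∈ tsupport f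
  · have hquot : ContDiffAt ℝ 1 (fun p : ℝ × ℝ => p.1 / p.2 ^ s) (f x, d x) :=
      contDiffAt_fst.div (contDiffAt_snd.rpow_const_of_ne (hd0 x hx).ne')
        (rpow_pos_of_pos (hd0 x hx) s).ne'
    obtain ⟨C, U, hU, hC⟩ := hquot.exists_lipschitzOnWith
    obtain ⟨K, V, hV, hK⟩ := hf.prodMk hd x
    exact ⟨C * K, V ∩ (fun y => (f y, d y)) ⁻¹' U,
      inter_mem hV ((hf.prodMk hd).continuous.continuousAt hU),
      hC.comp (hK.mono inter_subset_left) fun y hy => hy.2⟩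
  · refine ⟨0, {y | f y = 0}, notMem_tsupport_iff_eventuallyEq.1 hx, ?_⟩
    intro y (hy : f y = 0) z (hz : f z = 0)
    simp [hy, hz]

theorem integrable_div_rpow [TopologicalSpace X] [R1Space X] [MeasurableSpace X]
    [OpensMeasurableSpace X] {μ : Measure X} [IsFiniteMeasureOnCompacts μ]
    (hf : Continuous f) (hfc : HasCompactSupport f) (hd : Continuous d)
    (hd0 : ∀ x ∈ tsupport f, 0 < d x) (s : ℝ) : Integrable (fun x => f x / d x ^ s) μ := by
  refine Continuous.integrable_of_hasCompactSupport (continuous_of_tsupport fun x hx => ?_)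
    (hasCompactSupport_div_rpow hfc d s)
  have hdx := hd0 x (tsupport_div_rpow_subset f d s hx)
  exact hf.continuousAt.div (hd.continuousAt.rpow_const (.inl hdx.ne')) (rpow_pos_of_pos hdx s).ne'

end Division

section Hardy

theorem lineDeriv_sq_div_rpow {E : Type*} [NormedAddCommGroup E] [NormedSpace ℝ E] {v d : E → ℝ}
    {x e : E} (hv : DifferentiableAt ℝ v x) (hd : LineDifferentiableAt ℝ d x e)
    (hdx : x ∈ tsupport v → 0 < d x) (s : ℝ) : lineDeriv ℝ (fun y => v y ^ 2 / d y ^ s) x e =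
      2 * (v x * fderiv ℝ v x e / d x ^ s) - s * (v x ^ 2 / d x ^ (s + 1) * lineDeriv ℝ d x e) := by
  by_cases hxv : x ∈ tsupport v
  · replace hdx := hdx hxv
    have hx : x + (0 : ℝ) • e = x := by simp
    have hquot := ((hv.hasFDerivAt.hasLineDerivAt e).pow 2).div
      (hd.hasLineDerivAt.rpow_const (p := s) (.inl (by rw [hx]; exact hdx.ne')))
      (by rw [hx]; exact (rpow_pos_of_pos hdx s).ne')
    refine hquot.deriv.trans ?_
    simp only [hx, Pi.pow_apply]
    rw [rpow_sub_one hdx.ne', rpow_add_one hdx.ne']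
    field_simp
    push_cast
    ring
  · have hquot : x ∉ tsupport fun y => v y ^ 2 / d y ^ s := fun h =>
      hxv (tsupport_comp_subset (g := fun t : ℝ => t ^ 2) (by simp) v
        (tsupport_div_rpow_subset _ d s h))
    rw [lineDeriv_eq_zero_of_notMem_tsupport hquot, image_eq_zero_of_notMem_tsupport hxv]
    simp

theorem mul_flux_le_sq_div_rpow_sub {δ : ℝ} (hδ : 0 < δ) (α v A p : ℝ) :
    (α + 1) / 2 * ((2 * (v * A / δ ^ (α + 1)) - (α + 1) * (v ^ 2 / δ ^ (α + 2) * p)) * p) ≤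
      A ^ 2 / δ ^ α - ((α + 1) / 2) ^ 2 * (v ^ 2 / δ ^ (α + 2) * p ^ 2) := by
  have hsq : 0 ≤ (A - (α + 1) / 2 * v * p / δ) ^ 2 / δ ^ α := by positivity
  refine sub_nonneg.1 (hsq.trans_eq ?_)
  rw [show α + 2 = α + 1 + 1 by ring, rpow_add_one hδ.ne', rpow_add_one hδ.ne']
  field_simp
  ring

variable {E : Type*} [NormedAddCommGroup E] [MeasurableSpace E] [BorelSpace E] {Ω : Set E}
  {d v : E → ℝ} {K : ℝ≥0}

section Directional

variable [NormedSpace ℝ E] {μ : Measure E}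

theorem integrable_mul_div_rpow_mul_lineDeriv_pow [IsFiniteMeasureOnCompacts μ] {f g : E → ℝ}
    (hf : Continuous f) (hfc : HasCompactSupport f) (hg : Continuous g) (hdl : LipschitzWith K d)
    (hd0 : ∀ x ∈ tsupport f, 0 < d x) (s : ℝ) (e : E) (n : ℕ) :
    Integrable (fun x => f x * g x / d x ^ s * lineDeriv ℝ d x e ^ n) μ := by
  refine (integrable_div_rpow (hf.mul hg) hfc.mul_right hdl.continuous
    (fun x hx => hd0 x (tsupport_mul_subset_left hx)) s).mul_bdd (c := (K * ‖e‖) ^ n)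
    ((measurable_lineDeriv hdl.continuous).pow_const n).aestronglyMeasurable
    (.of_forall fun x => ?_)
  rw [norm_pow]
  exact pow_le_pow_left₀ (norm_nonneg _) (norm_lineDeriv_le_of_lipschitz ℝ hdl) n

theorem integrable_sq_div_rpow_mul_lineDeriv_sq [IsFiniteMeasureOnCompacts μ]
    (hv : Continuous v) (hvc : HasCompactSupport v) (hdl : LipschitzWith K d)
    (hd0 : ∀ x ∈ tsupport v, 0 < d x) (s : ℝ) (e : E) :
    Integrable (fun x => v x ^ 2 / d x ^ s * lineDeriv ℝ d x e ^ 2) μ := by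
  simpa only [sq (v _)] using
    integrable_mul_div_rpow_mul_lineDeriv_pow hv hvc hv hdl hd0 s e 2

theorem integrable_fderiv_sq_div_rpow [IsFiniteMeasureOnCompacts μ] (hv : ContDiff ℝ 1 v)
    (hvc : HasCompactSupport v) (hd : Continuous d) (hd0 : ∀ x ∈ tsupport v, 0 < d x) (s : ℝ)
    (e : E) : Integrable (fun x => fderiv ℝ v x e ^ 2 / d x ^ s) μ := by
  have hdv : Continuous fun x => fderiv ℝ v x e :=
    (hv.continuous_fderiv one_ne_zero).clm_apply continuous_const
  simp_rw [sq]
  exact integrable_div_rpow (hdv.mul hdv) (hvc.fderiv_apply ℝ e).mul_right hd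
    (fun x hx => hd0 x (tsupport_fderiv_apply_subset ℝ e (tsupport_mul_subset_left hx))) s

theorem integral_lineDeriv_sq_div_rpow_mul_lineDeriv_nonneg [FiniteDimensional ℝ E]
    [μ.IsAddHaarMeasure] (hΩ : IsOpen Ω) (hd : ConcaveOn ℝ Ω d) (hdl : LipschitzWith K d)
    (hd0 : ∀ x ∈ Ω, 0 < d x) (hv : LocallyLipschitz v) (hvc : HasCompactSupport v)
    (hvs : tsupport v ⊆ Ω) (s : ℝ) (e : E) :
    0 ≤ ∫ x, lineDeriv ℝ (fun y => v y ^ 2 / d y ^ s) x e * lineDeriv ℝ d x e ∂μ := by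
  have hsq_supp : tsupport (fun x => v x ^ 2) ⊆ Ω :=
    (tsupport_comp_subset (g := fun t : ℝ => t ^ 2) (by simp) v).trans hvs
  have hsqc : HasCompactSupport fun x => v x ^ 2 :=
    hvc.comp_left (g := fun t : ℝ => t ^ 2) (by simp)
  have hsq : LocallyLipschitz fun x => v x ^ 2 :=
    (contDiff_id.pow 2 : ContDiff ℝ 1 fun t : ℝ => t ^ 2).locallyLipschitz.comp hv
  obtain ⟨C, hC⟩ := exists_lipschitzWith_div_rpow hsq hsqc hdl.locallyLipschitz
    (fun x hx => hd0 x (hsq_supp hx)) s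
  have hsupp := (tsupport_div_rpow_subset (fun x => v x ^ 2) d s).trans hsq_supp
  have hnonneg (x : E) : 0 ≤ v x ^ 2 / d x ^ s := by
    by_cases hx : x ∈ Ω
    · have := hd0 x hx
      positivity
    · simp [image_eq_zero_of_notMem_tsupport fun h => hx (hvs h)]
  exact integral_lineDeriv_mul_lineDeriv_nonneg hΩ hd hdl hC (hasCompactSupport_div_rpow hsqc d s)
    hsupp hnonneg e

theorem integral_sq_div_rpow_mul_lineDeriv_sq_le [FiniteDimensional ℝ E] [μ.IsAddHaarMeasure]
    (hΩ : IsOpen Ω) (hd : ConcaveOn ℝ Ω d) (hdl : LipschitzWith K d) (hd0 : ∀ x ∈ Ω, 0 < d x)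
    (hv : ContDiff ℝ 1 v) (hvc : HasCompactSupport v) (hvs : tsupport v ⊆ Ω) {α : ℝ}
    (hα : -1 ≤ α) (e : E) :
    ((α + 1) / 2) ^ 2 * ∫ x, v x ^ 2 / d x ^ (α + 2) * lineDeriv ℝ d x e ^ 2 ∂μ ≤
      ∫ x, fderiv ℝ v x e ^ 2 / d x ^ α ∂μ := by
  have hdv : Continuous fun x => fderiv ℝ v x e := (hv.continuous_fderiv one_ne_zero).clm_apply
    continuous_const
  have hd0v : ∀ x ∈ tsupport v, 0 < d x := fun x hx => hd0 x (hvs hx)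
  have hvv := integrable_sq_div_rpow_mul_lineDeriv_sq (μ := μ) hv.continuous hvc hdl hd0v (α + 2) e
  have hvdv : Integrable
      (fun x => v x * fderiv ℝ v x e / d x ^ (α + 1) * lineDeriv ℝ d x e) μ := by
    simpa only [pow_one] using
      integrable_mul_div_rpow_mul_lineDeriv_pow hv.continuous hvc hdv hdl hd0v (α + 1) e 1
  have hdvdv := integrable_fderiv_sq_div_rpow (μ := μ) hv hvc hdl.continuous hd0v α e
  set flux : E → ℝ := fun x => (2 * (v x * fderiv ℝ v x e / d x ^ (α + 1)) -
    (α + 1) * (v x ^ 2 / d x ^ (α + 2) * lineDeriv ℝ d x e)) * lineDeriv ℝ d x e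
  have hflux : Integrable flux μ := by
    refine ((hvdv.const_mul 2).sub (hvv.const_mul (α + 1))).congr
      (.of_forall fun x => ?_)
    simp only [flux, Pi.sub_apply]
    ring
  have hflux_nonneg : 0 ≤ ∫ x, flux x ∂μ := by
    refine (integral_lineDeriv_sq_div_rpow_mul_lineDeriv_nonneg hΩ hd hdl hd0
      hv.locallyLipschitz hvc hvs (α + 1) e).trans_eq (integral_congr_ae ?_)
    filter_upwards [hdl.ae_lineDifferentiableAt e] with x hdx
    rw [lineDeriv_sq_div_rpow (hv.differentiable one_ne_zero x) hdx (hd0v x),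
      add_assoc, one_add_one_eq_two]
  have hflux_le (x : E) : (α + 1) / 2 * flux x ≤ fderiv ℝ v x e ^ 2 / d x ^ α -
      ((α + 1) / 2) ^ 2 * (v x ^ 2 / d x ^ (α + 2) * lineDeriv ℝ d x e ^ 2) := by
    by_cases hx : x ∈ tsupport v
    · exact mul_flux_le_sq_div_rpow_sub (hd0v x hx) α _ _ _
    · simp [flux, image_eq_zero_of_notMem_tsupport hx, fderiv_of_notMem_tsupport ℝ hx]
  rw [← sub_nonneg, ← integral_const_mul, ← integral_sub hdvdv (hvv.const_mul _)]
  calc 0 ≤ (α + 1) / 2 * ∫ x, flux x ∂μ := mul_nonneg (by linarith) hflux_nonneg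
    _ = ∫ x, (α + 1) / 2 * flux x ∂μ := (integral_const_mul _ _).symm
    _ ≤ _ := integral_mono (hflux.const_mul _) (hdvdv.sub (hvv.const_mul _)) hflux_le

end Directional

variable [InnerProductSpace ℝ E] [FiniteDimensional ℝ E] {μ : Measure E} [μ.IsAddHaarMeasure]

theorem integral_sq_div_rpow_mul_norm_fderiv_sq_le (hΩ : IsOpen Ω) (hd : ConcaveOn ℝ Ω d)
    (hdl : LipschitzWith K d) (hd0 : ∀ x ∈ Ω, 0 < d x) (hv : ContDiff ℝ 1 v)
    (hvc : HasCompactSupport v) (hvs : tsupport v ⊆ Ω) {α : ℝ} (hα : -1 ≤ α) :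
    ((α + 1) / 2) ^ 2 * ∫ x, v x ^ 2 / d x ^ (α + 2) * ‖fderiv ℝ d x‖ ^ 2 ∂μ ≤
      ∫ x, ‖fderiv ℝ v x‖ ^ 2 / d x ^ α ∂μ := by
  have hd0v : ∀ x ∈ tsupport v, 0 < d x := fun x hx => hd0 x (hvs hx)
  let b := stdOrthonormalBasis ℝ E
  have hleft : ∫ x, v x ^ 2 / d x ^ (α + 2) * ‖fderiv ℝ d x‖ ^ 2 ∂μ =
      ∑ i, ∫ x, v x ^ 2 / d x ^ (α + 2) * lineDeriv ℝ d x (b i) ^ 2 ∂μ := by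
    rw [← integral_finsetSum _ fun i _ =>
      integrable_sq_div_rpow_mul_lineDeriv_sq hv.continuous hvc hdl hd0v _ _]
    refine integral_congr_ae ?_
    filter_upwards [hdl.ae_differentiableAt] with x hdx
    simp_rw [hdx.lineDeriv_eq_fderiv, ← Finset.mul_sum, b.norm_dual]
  have hright : ∫ x, ‖fderiv ℝ v x‖ ^ 2 / d x ^ α ∂μ =
      ∑ i, ∫ x, fderiv ℝ v x (b i) ^ 2 / d x ^ α ∂μ := by
    rw [← integral_finsetSum _ fun i _ =>
      integrable_fderiv_sq_div_rpow hv hvc hdl.continuous hd0v _ _]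
    simp_rw [← Finset.sum_div, b.norm_dual]
  rw [hleft, hright, Finset.mul_sum]
  exact Finset.sum_le_sum fun i _ =>
    integral_sq_div_rpow_mul_lineDeriv_sq_le hΩ hd hdl hd0 hv hvc hvs hα (b i)

theorem integral_sq_div_infDist_rpow_le (hΩ : IsOpen Ω) (hconv : Convex ℝ Ω)
    (hne : (frontier Ω).Nonempty) (hv : ContDiff ℝ 1 v) (hvc : HasCompactSupport v)
    (hvs : tsupport v ⊆ Ω) {α : ℝ} (hα : -1 ≤ α) :
    ((α + 1) / 2) ^ 2 * ∫ x, v x ^ 2 / infDist x (frontier Ω) ^ (α + 2) ∂μ ≤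
      ∫ x, ‖fderiv ℝ v x‖ ^ 2 / infDist x (frontier Ω) ^ α ∂μ := by
  set d : E → ℝ := fun x => infDist x (frontier Ω)
  have hdl : LipschitzWith 1 d := lipschitz_infDist_pt _
  have hd0 : ∀ x ∈ Ω, 0 < d x := fun x hx => infDist_frontier_pos hΩ hne hx
  have hint : Integrable (fun x => v x ^ 2 / d x ^ (α + 2) * ‖fderiv ℝ d x‖ ^ 2) μ := by
    simp_rw [sq (v _)]
    refine (integrable_div_rpow (hv.continuous.mul hv.continuous) hvc.mul_right hdl.continuous
      (fun x hx => hd0 x (hvs (tsupport_mul_subset_left hx))) _).mul_bdd (c := 1)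
      ((measurable_fderiv ℝ d).norm.pow_const 2).aestronglyMeasurable (.of_forall fun x => ?_)
    rw [norm_pow, norm_norm]
    exact pow_le_one₀ (norm_nonneg _) (norm_fderiv_le_of_lipschitz ℝ hdl)
  refine le_trans (mul_le_mul_of_nonneg_left (integral_mono_of_nonneg ?_ hint ?_) (sq_nonneg _))
    (integral_sq_div_rpow_mul_norm_fderiv_sq_le hΩ (concaveOn_infDist_frontier hΩ hconv hne)
      hdl hd0 hv hvc hvs hα)
  · exact .of_forall fun x => by have := infDist_nonneg (x := x) (s := frontier Ω); positivity
  · filter_upwards [hdl.ae_differentiableAt] with x hdx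
    by_cases hx : x ∈ Ω
    · have hgrad : 1 ≤ ‖fderiv ℝ d x‖ := one_le_norm_fderiv_infDist isClosed_frontier hne
        (fun h => (hΩ.frontier_eq ▸ h).2 hx) hdx
      have := hd0 x hx
      exact le_mul_of_one_le_right (by positivity) (one_le_pow₀ hgrad)
    · simp [image_eq_zero_of_notMem_tsupport fun h => hx (hvs h)]

end Hardy

section Laplacian

section SecondDerivative

variable {E F : Type*} [NormedAddCommGroup E] [NormedSpace ℝ E] [NormedAddCommGroup F]
  [NormedSpace ℝ F] {u : E → F}

theorem contDiff_one_fderiv_apply (hu : ContDiff ℝ 2 u) (e : E) :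
    ContDiff ℝ 1 fun x => fderiv ℝ u x e :=
  (hu.fderiv_right (m := 1) (by norm_num)).clm_apply contDiff_const

theorem fderiv_fderiv_apply (hu : ContDiff ℝ 2 u) (x a b : E) :
    fderiv ℝ (fun y => fderiv ℝ u y a) x b = fderiv ℝ (fderiv ℝ u) x b a := by
  have hdiff := (hu.fderiv_right (m := 1) (by norm_num)).differentiable one_ne_zero x
  simp [fderiv_clm_apply hdiff (differentiableAt_const a)]

theorem fderiv_fderiv_apply_comm (hu : ContDiff ℝ 2 u) (x a b : E) :
    fderiv ℝ (fun y => fderiv ℝ u y a) x b = fderiv ℝ (fun y => fderiv ℝ u y b) x a := by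
  rw [fderiv_fderiv_apply hu, fderiv_fderiv_apply hu]
  exact hu.contDiffAt.isSymmSndFDerivAt (by simp) b a

end SecondDerivative

section NullLagrangian

variable {E : Type*} [NormedAddCommGroup E] [NormedSpace ℝ E] [FiniteDimensional ℝ E]
  [MeasurableSpace E] [BorelSpace E] {μ : Measure E} [μ.IsAddHaarMeasure] {f g : E → ℝ}

theorem integral_fderiv_mul_eq_neg_mul_fderiv (hf : ContDiff ℝ 1 f) (hfc : HasCompactSupport f)
    (hg : ContDiff ℝ 1 g) (e : E) :
    ∫ x, fderiv ℝ f x e * g x ∂μ = -∫ x, f x * fderiv ℝ g x e ∂μ := by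
  have hdf : Continuous fun x => fderiv ℝ f x e :=
    (hf.continuous_fderiv one_ne_zero).clm_apply continuous_const
  have hdg : Continuous fun x => fderiv ℝ g x e :=
    (hg.continuous_fderiv one_ne_zero).clm_apply continuous_const
  rw [integral_mul_fderiv_eq_neg_fderiv_mul_of_integrable, neg_neg]
  · exact (hdf.mul hg.continuous).integrable_of_hasCompactSupport (hfc.fderiv_apply ℝ e).mul_right
  · exact (hf.continuous.mul hdg).integrable_of_hasCompactSupport hfc.mul_right
  · exact (hf.continuous.mul hg.continuous).integrable_of_hasCompactSupport hfc.mul_right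
  · exact fun x _ => hf.differentiable one_ne_zero x
  · exact fun x _ => hg.differentiable one_ne_zero x

theorem integral_fderiv_mul_fderiv_comm (hf : ContDiff ℝ 1 f) (hfc : HasCompactSupport f)
    (hg : ContDiff ℝ 2 g) (a b : E) :
    ∫ x, fderiv ℝ f x a * fderiv ℝ g x b ∂μ = ∫ x, fderiv ℝ f x b * fderiv ℝ g x a ∂μ := by
  rw [integral_fderiv_mul_eq_neg_mul_fderiv hf hfc (contDiff_one_fderiv_apply hg b),
    integral_fderiv_mul_eq_neg_mul_fderiv hf hfc (contDiff_one_fderiv_apply hg a)]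
  simp_rw [fderiv_fderiv_apply_comm hg _ a b]

end NullLagrangian

variable {E : Type*} [NormedAddCommGroup E] [InnerProductSpace ℝ E] [FiniteDimensional ℝ E]
  {ι : Type*} [Fintype ι] {u : E → ℝ}

theorem laplacian_eq_sum_fderiv_fderiv (b : OrthonormalBasis ι ℝ E) (hu : ContDiff ℝ 2 u) (x : E) :
    (Δ u) x = ∑ i, fderiv ℝ (fun y => fderiv ℝ u y (b i)) x (b i) := by
  simp [InnerProductSpace.laplacian_eq_iteratedFDeriv_orthonormalBasis u b,
    iteratedFDeriv_two_apply, fderiv_fderiv_apply hu]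

theorem lap_eq_laplacian {N : ℕ} (u : EuclideanSpace ℝ (Fin N) → ℝ) : lap u = Δ u := by
  ext x
  simp [lap, InnerProductSpace.laplacian_eq_iteratedFDeriv_orthonormalBasis u
    (EuclideanSpace.basisFun (Fin N) ℝ)]

theorem laplacian_eq_zero_of_notMem_tsupport {x : E} (hx : x ∉ tsupport u) : (Δ u) x = 0 := by
  have hzero : iteratedFDeriv ℝ 2 u x = 0 := image_eq_zero_of_notMem_tsupport fun h =>
    hx (tsupport_iteratedFDeriv_subset 2 h)
  simp [InnerProductSpace.laplacian_eq_iteratedFDeriv_stdOrthonormalBasis, hzero]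

theorem integral_laplacian_sq [MeasurableSpace E] [BorelSpace E] {μ : Measure E}
    [μ.IsAddHaarMeasure] (b : OrthonormalBasis ι ℝ E) (hu : ContDiff ℝ 3 u)
    (huc : HasCompactSupport u) :
    ∫ x, (Δ u) x ^ 2 ∂μ = ∑ i, ∫ x, ‖fderiv ℝ (fun y => fderiv ℝ u y (b i)) x‖ ^ 2 ∂μ := by
  have hu2 : ContDiff ℝ 2 u := hu.of_le (by norm_num)
  have hdu (i : ι) : ContDiff ℝ 2 fun x => fderiv ℝ u x (b i) :=
    (hu.fderiv_right (m := 2) (by norm_num)).clm_apply contDiff_const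
  have hduc (i : ι) : HasCompactSupport fun x => fderiv ℝ u x (b i) := huc.fderiv_apply ℝ (b i)
  have hint (i j : ι) (e e' : E) :
      Integrable (fun x => fderiv ℝ (fun y => fderiv ℝ u y (b i)) x e *
        fderiv ℝ (fun y => fderiv ℝ u y (b j)) x e') μ :=
    ((contDiff_one_fderiv_apply (hdu i) e).continuous.mul
      (contDiff_one_fderiv_apply (hdu j) e').continuous).integrable_of_hasCompactSupport
      ((hduc i).fderiv_apply ℝ e).mul_right
  simp_rw [laplacian_eq_sum_fderiv_fderiv b hu2, b.norm_dual, sq, Finset.sum_mul_sum]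
  rw [integral_finsetSum _ fun i _ => integrable_finsetSum _ fun j _ => hint i j _ _]
  refine Finset.sum_congr rfl fun i _ => ?_
  rw [integral_finsetSum _ fun j _ => hint i j _ _, integral_finsetSum _ fun j _ => hint i i _ _]
  refine Finset.sum_congr rfl fun j _ => ?_
  rw [integral_fderiv_mul_fderiv_comm ((hdu i).of_le (by norm_num)) (hduc i) (hdu j)]
  simp_rw [fderiv_fderiv_apply_comm hu2 _ (b j) (b i)]

end Laplacian

section Rellich

variable {E : Type*} [NormedAddCommGroup E] [InnerProductSpace ℝ E] [FiniteDimensional ℝ E]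
  [MeasurableSpace E] [BorelSpace E] {Ω : Set E} {u : E → ℝ}

theorem integral_norm_fderiv_sq_div_infDist_rpow_le {μ : Measure E} [μ.IsAddHaarMeasure]
    (hΩ : IsOpen Ω) (hconv : Convex ℝ Ω) (hne : (frontier Ω).Nonempty) (hu : ContDiff ℝ 3 u)
    (huc : HasCompactSupport u) (hus : tsupport u ⊆ Ω) :
    1 / 4 * ∫ x, ‖fderiv ℝ u x‖ ^ 2 / infDist x (frontier Ω) ^ (2 : ℝ) ∂μ ≤
      ∫ x, (Δ u) x ^ 2 ∂μ := by
  have hu2 : ContDiff ℝ 2 u := hu.of_le (by norm_num)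
  let b := stdOrthonormalBasis ℝ E
  have hpos : ∀ x ∈ tsupport u, 0 < infDist x (frontier Ω) := fun x hx =>
    infDist_frontier_pos hΩ hne (hus hx)
  simp_rw [b.norm_dual, Finset.sum_div]
  rw [integral_laplacian_sq b hu huc, integral_finsetSum _ fun i _ =>
    integrable_fderiv_sq_div_rpow (hu.of_le (by norm_num)) huc (continuous_infDist_pt _) hpos 2 _,
    Finset.mul_sum]
  refine Finset.sum_le_sum fun i _ => ?_
  calc 1 / 4 * ∫ x, fderiv ℝ u x (b i) ^ 2 / infDist x (frontier Ω) ^ (2 : ℝ) ∂μ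
      = ((0 + 1) / 2) ^ 2 *
          ∫ x, fderiv ℝ u x (b i) ^ 2 / infDist x (frontier Ω) ^ ((0 : ℝ) + 2) ∂μ := by norm_num
    _ ≤ ∫ x, ‖fderiv ℝ (fun y => fderiv ℝ u y (b i)) x‖ ^ 2 / infDist x (frontier Ω) ^ (0 : ℝ) ∂μ :=
      integral_sq_div_infDist_rpow_le hΩ hconv hne (contDiff_one_fderiv_apply hu2 (b i))
        (huc.fderiv_apply ℝ (b i)) ((tsupport_fderiv_apply_subset ℝ (b i)).trans hus) (by norm_num)
    _ = ∫ x, ‖fderiv ℝ (fun y => fderiv ℝ u y (b i)) x‖ ^ 2 ∂μ := by simp only [rpow_zero, div_one]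

theorem owen_rellich_general (μ : Measure E) [μ.IsAddHaarMeasure] (hΩ : IsOpen Ω)
    (hconv : Convex ℝ Ω) (hne : (frontier Ω).Nonempty) (hu : ContDiff ℝ 3 u)
    (huc : HasCompactSupport u) (hus : tsupport u ⊆ Ω) :
    9 / 16 * ∫ x in Ω, u x ^ 2 / infDist x (frontier Ω) ^ 4 ∂μ ≤ ∫ x in Ω, (Δ u) x ^ 2 ∂μ := by
  have hu0 {x : E} (hx : x ∉ Ω) : x ∉ tsupport u := fun h => hx (hus h)
  have hleft : ∫ x in Ω, u x ^ 2 / infDist x (frontier Ω) ^ 4 ∂μ =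
      ∫ x, u x ^ 2 / infDist x (frontier Ω) ^ 4 ∂μ :=
    setIntegral_eq_integral_of_forall_compl_eq_zero fun x hx => by
      simp [image_eq_zero_of_notMem_tsupport (hu0 hx)]
  have hright : ∫ x in Ω, (Δ u) x ^ 2 ∂μ = ∫ x, (Δ u) x ^ 2 ∂μ :=
    setIntegral_eq_integral_of_forall_compl_eq_zero fun x hx => by
      simp [laplacian_eq_zero_of_notMem_tsupport (hu0 hx)]
  have hardy : 9 / 4 * ∫ x, u x ^ 2 / infDist x (frontier Ω) ^ 4 ∂μ ≤
      ∫ x, ‖fderiv ℝ u x‖ ^ 2 / infDist x (frontier Ω) ^ (2 : ℝ) ∂μ := by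
    refine Eq.trans_le ?_ (integral_sq_div_infDist_rpow_le (α := 2) hΩ hconv hne
      (hu.of_le (by norm_num)) huc hus (by norm_num))
    norm_num
  rw [hleft, hright]
  calc 9 / 16 * ∫ x, u x ^ 2 / infDist x (frontier Ω) ^ 4 ∂μ
      = 1 / 4 * (9 / 4 * ∫ x, u x ^ 2 / infDist x (frontier Ω) ^ 4 ∂μ) := by ring
    _ ≤ 1 / 4 * ∫ x, ‖fderiv ℝ u x‖ ^ 2 / infDist x (frontier Ω) ^ (2 : ℝ) ∂μ := by gcongr
    _ ≤ _ := integral_norm_fderiv_sq_div_infDist_rpow_le hΩ hconv hne hu huc hus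

end Rellich

theorem owen_rellich (N : ℕ) (Ω : Set (EuclideanSpace ℝ (Fin N)))
    (hΩ : IsOpen Ω) (hconv : Convex ℝ Ω) (hbdd : Bornology.IsBounded Ω)
    (u : EuclideanSpace ℝ (Fin N) → ℝ) (hu : ContDiff ℝ (⊤ : ℕ∞) u)
    (husupp : HasCompactSupport u) (husupp' : tsupport u ⊆ Ω) :
    ∫ x in Ω, (lap u x) ^ 2 ≥
      9 / 16 * ∫ x in Ω, (u x) ^ 2 / Metric.infDist x (frontier Ω) ^ 4 := by
  obtain hf | hf := (frontier Ω).eq_empty_or_nonempty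
  · simpa [hf] using integral_nonneg fun x => sq_nonneg (lap u x)
  · rw [lap_eq_laplacian]
    exact owen_rellich_general volume hΩ hconv hf (contDiff_infty.1 hu 3) husupp husupp'
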